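/- Let ρ = ν∘π⁻¹ be a weak ψ-Gibbs measure with respect to a C¹-IFS. For every set G ⊂ I^* of finite words whose cylinders form a partition of I^ℕ (i.e. ⋃_{u∈G}[u] = I^ℕ with pairwise disjoint cylinders) and every Borel set E ⊆ [0,1], ρ(E) ≥ Σ_{u∈G} c_{|u|} ν([u]) ρ(T_u^{−1}(E)), where c_n = exp(−Σ_{i=0}^{n−1} var_i(ψ)); in particular log c_n = o(n). -/

import Mathlib

open MeasureTheory Set Filter Topology
open scoped ENNReal NNReal Classical

noncomputable section

namespace Symb

/-- Finite words over the alphabet `{1,…,N}`. -/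
abbrev Word (N : ℕ) := List (Fin N)

/-- The sequence space `I^ℕ`. -/
abbrev SeqSp (N : ℕ) := ℕ → Fin N

variable {N : ℕ}

/-- The shift map on `I^ℕ`. -/
def shift (x : SeqSp N) : SeqSp N := fun k => x (k + 1)

/-- The cylinder set `[w]` of a finite word `w`. -/
def cylinder (w : Word N) : Set (SeqSp N) := {x | ∀ i : Fin w.length, x i = w.get i}

/-- Concatenation `w x` of a finite word with an infinite sequence. -/
def cat (w : Word N) (x : SeqSp N) : SeqSp N := fun k =>
  if h : k < w.length then w.get ⟨k, h⟩ else x (k - w.length)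

/-- Birkhoff sum `S_m f(x) = Σ_{k<m} f(σ^k x)`. -/
def birkhoff (f : SeqSp N → ℝ) (m : ℕ) (x : SeqSp N) : ℝ :=
  ∑ k ∈ Finset.range m, f (shift^[k] x)

/-- `S_w f = sup_{x ∈ [w]} S_{|w|} f(x)`. -/
def supBirkhoff (f : SeqSp N → ℝ) (w : Word N) : ℝ :=
  sSup (birkhoff f w.length '' cylinder w)

/-- `s_w f = inf_{x ∈ [w]} S_{|w|} f(x)`. -/
def infBirkhoff (f : SeqSp N → ℝ) (w : Word N) : ℝ :=
  sInf (birkhoff f w.length '' cylinder w)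

/-- `Σ_{w ∈ Iᵐ} exp (S_w f)`. -/
def partSum (f : SeqSp N → ℝ) (m : ℕ) : ℝ :=
  ∑ v : Fin m → Fin N, Real.exp (supBirkhoff f (List.ofFn v))

/-- The topological pressure `P(f) = lim_m (1/m) log Σ_{w ∈ Iᵐ} exp(S_w f)`
(defined via `limsup`; for continuous `f` the limit exists). -/
def pressure (f : SeqSp N → ℝ) : ℝ :=
  Filter.limsup (fun m => Real.log (partSum f m) / m) Filter.atTop

/-- `var_k(f)`, the `k`-th variation of `f`. -/
def varn (f : SeqSp N → ℝ) (k : ℕ) : ℝ :=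
  sSup {d | ∃ x y : SeqSp N, (∀ i < k, x i = y i) ∧ d = |f x - f y|}

/-- The Perron–Frobenius (transfer) operator `L_ψ f(x) = Σ_{σ y = x} e^{ψ(y)} f(y)`. -/
def transfer (ψ f : SeqSp N → ℝ) (x : SeqSp N) : ℝ :=
  ∑ j : Fin N, Real.exp (ψ (cat [j] x)) * f (cat [j] x)

/-- `L_ψ 1 = 1`. -/
def Normalized (ψ : SeqSp N → ℝ) : Prop :=
  ∀ x, ∑ j : Fin N, Real.exp (ψ (cat [j] x)) = 1

/-- `ν` is a fixed point of the dual transfer operator: `∫ L_ψ f dν = ∫ f dν`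
for all continuous `f`. -/
def IsTransferFixed (ψ : SeqSp N → ℝ) (ν : MeasureTheory.Measure (SeqSp N)) : Prop :=
  ∀ f : SeqSp N → ℝ, Continuous f → ∫ x, transfer ψ f x ∂ν = ∫ x, f x ∂ν

/-- `ψ` is Hölder continuous on `I^ℕ`: `var_k(ψ) ≤ C αᵏ` for some `α ∈ (0,1)`. -/
def HolderPotential (ψ : SeqSp N → ℝ) : Prop :=
  ∃ α ∈ Set.Ioo (0:ℝ) 1, ∃ C : ℝ, ∀ k : ℕ, varn ψ k ≤ C * α ^ k

end Symb

namespace Symb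

/-- A `C¹` iterated function system on `[0,1]`. -/
structure C1IFS (N : ℕ) where
  T : Fin N → ℝ → ℝ
  T' : Fin N → ℝ → ℝ
  maps_into : ∀ i, Set.MapsTo (T i) (Set.Icc 0 1) (Set.Icc 0 1)
  hderiv : ∀ i, ∀ x ∈ Set.Icc (0:ℝ) 1, HasDerivWithinAt (T i) (T' i x) (Set.Icc 0 1) x
  cont_deriv : ∀ i, ContinuousOn (T' i) (Set.Icc 0 1)
  contracting : ∀ i, ∃ r < (1:ℝ), ∀ x ∈ Set.Icc (0:ℝ) 1, |T' i x| ≤ r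
  deriv_bdd_below : ∀ i, ∃ c > (0:ℝ), ∀ x ∈ Set.Icc (0:ℝ) 1, c ≤ |T' i x|

variable {N : ℕ}

/-- The IFS is non-trivial: at least two maps and no common fixed point. -/
def C1IFS.NontrivialIFS (Φ : C1IFS N) : Prop :=
  2 ≤ N ∧ ¬ ∃ x ∈ Set.Icc (0:ℝ) 1, ∀ i, Φ.T i x = x

/-- The IFS is `C^{1+γ}`: every `T_i'` is `γ`-Hölder for some `γ ∈ (0,1)`. -/
def C1IFS.IsC1gamma (Φ : C1IFS N) : Prop :=
  ∃ γ ∈ Set.Ioo (0:ℝ) 1, ∃ C : ℝ, ∀ i, ∀ x ∈ Set.Icc (0:ℝ) 1, ∀ y ∈ Set.Icc (0:ℝ) 1,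
    |Φ.T' i x - Φ.T' i y| ≤ C * |x - y| ^ γ

/-- `T_w = T_{w₁} ∘ ⋯ ∘ T_{w_k}`. -/
def wordMap (Φ : C1IFS N) : Word N → ℝ → ℝ
  | [] => id
  | i :: w => Φ.T i ∘ wordMap Φ w

/-- `T_w'`, the derivative of `T_w` (by the chain rule). -/
def wordDeriv (Φ : C1IFS N) : Word N → ℝ → ℝ
  | [] => fun _ => 1
  | i :: w => fun x => Φ.T' i (wordMap Φ w x) * wordDeriv Φ w x

/-- `π` is the natural coding map of the IFS:  `π(x) ∈ T_{x|m}([0,1])` for all `m`. -/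
def IsCoding (Φ : C1IFS N) (π : SeqSp N → ℝ) : Prop :=
  ∀ x : SeqSp N, ∀ m : ℕ, π x ∈ wordMap Φ (List.ofFn fun i : Fin m => x i) '' Set.Icc 0 1

/-- The geometric potential `φ(ω) = log |T'_{ω₁}(π(σω))|`. -/
def geomPot (Φ : C1IFS N) (π : SeqSp N → ℝ) (x : SeqSp N) : ℝ :=
  Real.log |Φ.T' (x 0) (π (shift x))|

/-- The open set condition with feasible open set `(0,1)`. -/
def OSC (Φ : C1IFS N) : Prop :=
  ∀ i j, i ≠ j → Disjoint (Φ.T i '' Set.Ioo 0 1) (Φ.T j '' Set.Ioo 0 1)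

/-- Left endpoint of the interval `I_w = T_w([0,1])`. -/
def aW (Φ : C1IFS N) (w : Word N) : ℝ := sInf (wordMap Φ w '' Set.Icc 0 1)

/-- Right endpoint of the interval `I_w = T_w([0,1])`. -/
def bW (Φ : C1IFS N) (w : Word N) : ℝ := sSup (wordMap Φ w '' Set.Icc 0 1)

/-- `(b_m)` is a weak bounded distortion sequence for `Φ`: non-negative, `o(m)`, and
`e^{-b_{|w|}} ≤ T_w'(x)/T_w'(y) ≤ e^{b_{|w|}}` for all words `w` and `x,y ∈ [0,1]`. -/
def IsWBDPseq (Φ : C1IFS N) (b : ℕ → ℝ) : Prop :=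
  (∀ m, 0 ≤ b m) ∧ Filter.Tendsto (fun m => b m / m) Filter.atTop (nhds 0) ∧
  ∀ w : Word N, ∀ x ∈ Set.Icc (0:ℝ) 1, ∀ y ∈ Set.Icc (0:ℝ) 1,
    Real.exp (-(b w.length)) ≤ wordDeriv Φ w x / wordDeriv Φ w y ∧
    wordDeriv Φ w x / wordDeriv Φ w y ≤ Real.exp (b w.length)

end Symb
open Symb

/-!
Iterating `L_ψ* ν = ν` along a word `u` shows that `ν` restricted to the cylinder `[u]` is the image
under `x ↦ ux` of `ν` weighted by `exp (S_{|u|} ψ (ux))`. This weight varies with `x` by a factor of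
at most `1 / c_{|u|}`, so it is everywhere at least `c_{|u|} ν([u])`, which gives
`c_{|u|} ν([u]) ν(u⁻¹B) ≤ ν([u] ∩ B)`. Summing over disjoint cylinders and pushing forward by the
coding map, which conjugates `x ↦ ux` to `T_u`, proves the inequality. Continuity of `ψ` on the
compact sequence space gives `var_n(ψ) → 0`, and `log c_n = o(n)` is the Cesàro mean of this limit.
-/

namespace Symb

variable {N : ℕ}

section Words

theorem cat_nil (x : SeqSp N) : cat [] x = x := by
  funext k
  simp [cat]

theorem cat_cons (i : Fin N) (w : Word N) (x : SeqSp N) :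
    cat (i :: w) x = cat [i] (cat w x) := by
  funext k
  cases k <;> simp [cat]

theorem cat_singleton_zero (i : Fin N) (x : SeqSp N) : cat [i] x 0 = i := by
  simp [cat]

theorem cat_singleton_succ (i : Fin N) (x : SeqSp N) (k : ℕ) : cat [i] x (k + 1) = x k := by
  simp [cat]

theorem shift_cat_singleton (i : Fin N) (x : SeqSp N) : shift (cat [i] x) = x :=
  funext (cat_singleton_succ i x)

theorem cat_apply_eq_of_lt {w : Word N} {k : ℕ} (hk : k < w.length) (x y : SeqSp N) :
    cat w x k = cat w y k := by
  simp [cat, hk]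

theorem continuous_cat (w : Word N) : Continuous (cat w) := by
  refine continuous_pi fun k => ?_
  by_cases hk : k < w.length
  · simpa only [cat, hk, dite_true] using continuous_const
  · simpa only [cat, hk, dite_false] using continuous_apply _

theorem measurable_cat (w : Word N) : Measurable (cat w) :=
  (continuous_cat w).measurable

theorem shift_iterate_apply (k : ℕ) (x : SeqSp N) (i : ℕ) : shift^[k] x i = x (k + i) := by
  induction k generalizing x with
  | zero => simp
  | succ k ih => rw [Function.iterate_succ_apply, ih, shift, Nat.add_right_comm]

theorem measurableSet_cylinder (w : Word N) : MeasurableSet (cylinder w) := by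
  simp only [cylinder, ofPred_forall]
  exact .iInter fun i => measurable_pi_apply _ (measurableSet_singleton _)

theorem cylinder_nil : cylinder ([] : Word N) = univ :=
  eq_univ_of_forall fun _ i => i.elim0

theorem cat_singleton_mem_cylinder_cons {i j : Fin N} {w : Word N} {x : SeqSp N} :
    cat [j] x ∈ cylinder (i :: w) ↔ j = i ∧ x ∈ cylinder w := by
  simp [cylinder, Fin.forall_fin_succ, cat_singleton_zero, cat_singleton_succ]

theorem cat_singleton_preimage_cylinder_cons (i : Fin N) (w : Word N) :
    cat [i] ⁻¹' cylinder (i :: w) = cylinder w := by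
  ext x
  simp [cat_singleton_mem_cylinder_cons]

theorem cat_singleton_preimage_cylinder_cons_of_ne {i j : Fin N} (hij : j ≠ i) (w : Word N) :
    cat [j] ⁻¹' cylinder (i :: w) = ∅ := by
  ext x
  simp [cat_singleton_mem_cylinder_cons, hij]

theorem ofFn_cat_singleton (j : Fin N) (x : SeqSp N) (m : ℕ) :
    (List.ofFn fun i : Fin (m + 1) => cat [j] x i) = j :: List.ofFn fun i : Fin m => x i := by
  simp [List.ofFn_succ, cat_singleton_zero, cat_singleton_succ]

end Words

section Variation

variable {f : SeqSp N → ℝ}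

theorem varn_nonneg (f : SeqSp N → ℝ) (k : ℕ) : 0 ≤ varn f k := by
  refine Real.sSup_nonneg ?_
  rintro _ ⟨x, y, -, rfl⟩
  exact abs_nonneg _

theorem abs_sub_le_varn (hf : Continuous f) {k : ℕ} {x y : SeqSp N} (hxy : ∀ i < k, x i = y i) :
    |f x - f y| ≤ varn f k := by
  refine le_csSup ?_ ⟨x, y, hxy, rfl⟩
  have hrange : IsCompact (range fun p : SeqSp N × SeqSp N => |f p.1 - f p.2|) :=
    isCompact_range (by fun_prop)
  refine hrange.bddAbove.mono ?_
  rintro _ ⟨x, y, -, rfl⟩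
  exact ⟨(x, y), rfl⟩

theorem tendsto_varn (hf : Continuous f) : Tendsto (varn f) atTop (𝓝 0) := by
  let _ : MetricSpace (SeqSp N) := PiNat.metricSpace
  have huc : UniformContinuous f := CompactSpace.uniformContinuous_of_continuous hf
  refine Metric.tendsto_atTop.2 fun ε hε => ?_
  obtain ⟨δ, hδ, hfδ⟩ := Metric.uniformContinuous_iff.1 huc (ε / 2) (half_pos hε)
  obtain ⟨n, hn⟩ := exists_pow_lt_of_lt_one hδ (one_half_lt_one (α := ℝ))
  refine ⟨n, fun k hk => ?_⟩
  have hvar : varn f k ≤ ε / 2 := by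
    refine Real.sSup_le ?_ (half_pos hε).le
    rintro _ ⟨x, y, hxy, rfl⟩
    have hdist : dist x y ≤ (1 / 2) ^ n :=
      PiNat.mem_cylinder_iff_dist_le.1 fun i hi => hxy i (hi.trans_le hk)
    exact (hfδ (hdist.trans_lt hn)).le
  rw [Real.dist_0_eq_abs, abs_of_nonneg (varn_nonneg f k)]
  exact hvar.trans_lt (half_lt_self hε)

end Variation

section Distortion

variable {ψ : SeqSp N → ℝ}

theorem birkhoff_succ (f : SeqSp N → ℝ) (m : ℕ) (x : SeqSp N) :
    birkhoff f (m + 1) x = f x + birkhoff f m (shift x) := by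
  simp only [birkhoff, Finset.sum_range_succ', Function.iterate_succ_apply,
    Function.iterate_zero_apply, add_comm]

theorem abs_birkhoff_sub_le_sum_varn (hψ : Continuous ψ) {n : ℕ} {x y : SeqSp N}
    (hxy : ∀ i < n, x i = y i) :
    |birkhoff ψ n x - birkhoff ψ n y| ≤ ∑ i ∈ Finset.range n, varn ψ i := by
  have hterm : ∀ k ∈ Finset.range n,
      |ψ (shift^[k] x) - ψ (shift^[k] y)| ≤ varn ψ (n - 1 - k) := fun k _ => by
    refine abs_sub_le_varn hψ fun i hi => ?_
    rw [shift_iterate_apply, shift_iterate_apply]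
    exact hxy _ (by omega)
  calc |birkhoff ψ n x - birkhoff ψ n y|
      = |∑ k ∈ Finset.range n, (ψ (shift^[k] x) - ψ (shift^[k] y))| := by
        rw [birkhoff, birkhoff, Finset.sum_sub_distrib]
    _ ≤ ∑ k ∈ Finset.range n, |ψ (shift^[k] x) - ψ (shift^[k] y)| :=
        Finset.abs_sum_le_sum_abs _ _
    _ ≤ ∑ k ∈ Finset.range n, varn ψ (n - 1 - k) := Finset.sum_le_sum hterm
    _ = ∑ i ∈ Finset.range n, varn ψ i := Finset.sum_range_reflect _ _

/-- The constant `c_n = exp (-∑_{i < n} var_i(ψ))`, which bounds from below the ratio of the values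
of `exp (S_n ψ)` at two points of the same cylinder of length `n`. -/
def distortionConst (ψ : SeqSp N → ℝ) (n : ℕ) : ℝ :=
  Real.exp (-(∑ i ∈ Finset.range n, varn ψ i))

theorem tendsto_log_distortionConst_div (hψ : Continuous ψ) :
    Tendsto (fun n => Real.log (distortionConst ψ n) / n) atTop (𝓝 0) := by
  have hmean := (tendsto_varn hψ).cesaro.neg
  rw [neg_zero] at hmean
  refine hmean.congr fun n => ?_
  rw [distortionConst, Real.log_exp]
  ring

/-- The function `x ↦ exp (S_{|u|} ψ (ux))`: when `ν` is fixed by the dual transfer operator, it is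
the density with respect to `ν` of the restriction of `ν` to `[u]`, transported by `x ↦ ux`. -/
def cylinderDensity (ψ : SeqSp N → ℝ) (u : Word N) (x : SeqSp N) : ℝ≥0∞ :=
  ENNReal.ofReal (Real.exp (birkhoff ψ u.length (cat u x)))

theorem cylinderDensity_nil (ψ : SeqSp N → ℝ) (x : SeqSp N) : cylinderDensity ψ [] x = 1 := by
  simp [cylinderDensity, birkhoff]

theorem cylinderDensity_singleton (ψ : SeqSp N → ℝ) (i : Fin N) (x : SeqSp N) :
    cylinderDensity ψ [i] x = ENNReal.ofReal (Real.exp (ψ (cat [i] x))) := by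
  simp [cylinderDensity, birkhoff]

theorem cylinderDensity_cons (ψ : SeqSp N → ℝ) (i : Fin N) (w : Word N) (x : SeqSp N) :
    cylinderDensity ψ (i :: w) x
      = cylinderDensity ψ w x * cylinderDensity ψ [i] (cat w x) := by
  rw [cylinderDensity_singleton, cylinderDensity, cylinderDensity,
    ← ENNReal.ofReal_mul (Real.exp_pos _).le, ← Real.exp_add, List.length_cons, birkhoff_succ,
    cat_cons, shift_cat_singleton, add_comm]

theorem measurable_cylinderDensity_singleton (hψ : Continuous ψ) (i : Fin N) :
    Measurable (cylinderDensity ψ [i]) := by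
  simp_rw [funext (cylinderDensity_singleton ψ i)]
  exact (hψ.measurable.comp (measurable_cat [i])).exp.ennreal_ofReal

theorem distortionConst_mul_cylinderDensity_le (hψ : Continuous ψ) (u : Word N)
    (x y : SeqSp N) :
    ENNReal.ofReal (distortionConst ψ u.length) * cylinderDensity ψ u x
      ≤ cylinderDensity ψ u y := by
  have hdist := abs_birkhoff_sub_le_sum_varn hψ (x := cat u x) (y := cat u y)
    fun _ hi => cat_apply_eq_of_lt hi x y
  rw [cylinderDensity, cylinderDensity, distortionConst,
    ← ENNReal.ofReal_mul (Real.exp_pos _).le, ← Real.exp_add]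
  gcongr
  linarith [(abs_le.1 hdist).2]

end Distortion

section TransferFixed

variable {ψ : SeqSp N → ℝ} {ν : Measure (SeqSp N)}

/-- The measure `L_ψ* ν`, written as the sum over the inverse branches `x ↦ jx` of the shift, so
that it makes sense without duality with continuous functions. -/
def transferDual (ψ : SeqSp N → ℝ) (ν : Measure (SeqSp N)) : Measure (SeqSp N) :=
  Measure.sum fun j : Fin N => (ν.withDensity (cylinderDensity ψ [j])).map (cat [j])

theorem setLIntegral_transferDual (hψ : Continuous ψ) (ν : Measure (SeqSp N))
    {f : SeqSp N → ℝ≥0∞} (hf : Measurable f) {s : Set (SeqSp N)} (hs : MeasurableSet s) :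
    ∫⁻ x in s, f x ∂transferDual ψ ν
      = ∑ j : Fin N, ∫⁻ x in cat [j] ⁻¹' s, cylinderDensity ψ [j] x * f (cat [j] x) ∂ν := by
  rw [transferDual, Measure.restrict_sum _ hs, lintegral_sum_measure, tsum_fintype]
  refine Finset.sum_congr rfl fun j _ => ?_
  rw [setLIntegral_map hs hf (measurable_cat [j])]
  exact setLIntegral_withDensity_eq_setLIntegral_mul ν
    (measurable_cylinderDensity_singleton hψ j) (hf.comp (measurable_cat [j]))
    (measurable_cat [j] hs)

theorem ofReal_integral_transfer [IsFiniteMeasure ν] (hψ : Continuous ψ) {f : SeqSp N → ℝ}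
    (hf : Continuous f) (hf0 : 0 ≤ f) :
    ENNReal.ofReal (∫ x, transfer ψ f x ∂ν)
      = ∑ j : Fin N, ∫⁻ x, cylinderDensity ψ [j] x * ENNReal.ofReal (f (cat [j] x)) ∂ν := by
  let term (j : Fin N) (x : SeqSp N) : ℝ := Real.exp (ψ (cat [j] x)) * f (cat [j] x)
  have hterm0 (j) (x) : 0 ≤ term j x := mul_nonneg (Real.exp_pos _).le (hf0 _)
  have hint (j) : Integrable (term j) ν := by
    have hcont : Continuous (term j) :=
      ((hψ.comp (continuous_cat [j])).rexp).mul (hf.comp (continuous_cat [j]))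
    exact hcont.integrable_of_hasCompactSupport (.of_compactSpace _)
  calc ENNReal.ofReal (∫ x, transfer ψ f x ∂ν)
      = ENNReal.ofReal (∑ j, ∫ x, term j x ∂ν) := by
        rw [← integral_finsetSum _ fun j _ => hint j]
        rfl
    _ = ∑ j, ENNReal.ofReal (∫ x, term j x ∂ν) :=
        ENNReal.ofReal_sum_of_nonneg fun j _ => integral_nonneg (hterm0 j)
    _ = ∑ j, ∫⁻ x, cylinderDensity ψ [j] x * ENNReal.ofReal (f (cat [j] x)) ∂ν := by
        refine Finset.sum_congr rfl fun j _ => ?_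
        rw [ofReal_integral_eq_lintegral_ofReal (hint j) (.of_forall (hterm0 j))]
        refine lintegral_congr fun x => ?_
        rw [cylinderDensity_singleton, ENNReal.ofReal_mul (Real.exp_pos _).le]

theorem IsTransferFixed.transferDual_eq [IsFiniteMeasure ν] (hν : IsTransferFixed ψ ν)
    (hψ : Continuous ψ) : transferDual ψ ν = ν := by
  refine (ext_of_forall_lintegral_eq_of_IsFiniteMeasure fun f => ?_).symm
  have hfc : Continuous fun x => (f x : ℝ) := by fun_prop
  have hint : Integrable (fun x => (f x : ℝ)) ν :=
    hfc.integrable_of_hasCompactSupport (.of_compactSpace _)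
  calc ∫⁻ x, f x ∂ν = ENNReal.ofReal (∫ x, (f x : ℝ) ∂ν) := by
        rw [ofReal_integral_eq_lintegral_ofReal hint (.of_forall fun x => (f x).2)]
        simp only [ENNReal.ofReal_coe_nnreal]
    _ = ENNReal.ofReal (∫ x, transfer ψ (fun x => f x) x ∂ν) := by rw [hν _ hfc]
    _ = ∑ j, ∫⁻ x, cylinderDensity ψ [j] x * f (cat [j] x) ∂ν := by
        rw [ofReal_integral_transfer hψ hfc fun x => (f x).2]
        simp only [ENNReal.ofReal_coe_nnreal]
    _ = ∫⁻ x, f x ∂transferDual ψ ν := by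
        simpa using (setLIntegral_transferDual hψ ν (f := fun x => f x) (by fun_prop) .univ).symm

theorem setLIntegral_cylinder_cons (hψ : Continuous ψ) (hν : transferDual ψ ν = ν)
    (i : Fin N) (w : Word N) {f : SeqSp N → ℝ≥0∞} (hf : Measurable f) :
    ∫⁻ x in cylinder (i :: w), f x ∂ν
      = ∫⁻ x in cylinder w, cylinderDensity ψ [i] x * f (cat [i] x) ∂ν := by
  conv_lhs => rw [← hν]
  rw [setLIntegral_transferDual hψ ν hf (measurableSet_cylinder _), Fintype.sum_eq_single i,
    cat_singleton_preimage_cylinder_cons]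
  intro j hj
  rw [cat_singleton_preimage_cylinder_cons_of_ne hj, setLIntegral_empty]

theorem setLIntegral_cylinder (hψ : Continuous ψ) (hν : transferDual ψ ν = ν) (u : Word N)
    {f : SeqSp N → ℝ≥0∞} (hf : Measurable f) :
    ∫⁻ x in cylinder u, f x ∂ν = ∫⁻ x, cylinderDensity ψ u x * f (cat u x) ∂ν := by
  induction u generalizing f with
  | nil => simp only [cylinder_nil, Measure.restrict_univ, cylinderDensity_nil, cat_nil, one_mul]
  | cons i w ih =>
    have hbranch : Measurable fun x => cylinderDensity ψ [i] x * f (cat [i] x) :=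
      (measurable_cylinderDensity_singleton hψ i).mul (hf.comp (measurable_cat [i]))
    rw [setLIntegral_cylinder_cons hψ hν i w hf, ih hbranch]
    refine lintegral_congr fun x => ?_
    rw [cylinderDensity_cons ψ i w, cat_cons i w, mul_assoc]

theorem measure_inter_cylinder (hψ : Continuous ψ) (hν : transferDual ψ ν = ν) (u : Word N)
    {B : Set (SeqSp N)} (hB : MeasurableSet B) :
    ν (B ∩ cylinder u) = ∫⁻ x in cat u ⁻¹' B, cylinderDensity ψ u x ∂ν := by
  calc ν (B ∩ cylinder u) = ∫⁻ x in cylinder u, B.indicator 1 x ∂ν := by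
        rw [lintegral_indicator_one hB, Measure.restrict_apply hB]
    _ = ∫⁻ x, cylinderDensity ψ u x * B.indicator 1 (cat u x) ∂ν :=
        setLIntegral_cylinder hψ hν u (measurable_one.indicator hB)
    _ = ∫⁻ x, (cat u ⁻¹' B).indicator (cylinderDensity ψ u) x ∂ν := by
        refine lintegral_congr fun x => ?_
        by_cases hx : cat u x ∈ B <;> simp [hx]
    _ = ∫⁻ x in cat u ⁻¹' B, cylinderDensity ψ u x ∂ν :=
        lintegral_indicator (measurable_cat u hB) _

variable [IsProbabilityMeasure ν]

theorem distortionConst_mul_measure_cylinder_le (hψ : Continuous ψ)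
    (hν : transferDual ψ ν = ν) (u : Word N) (y : SeqSp N) :
    ENNReal.ofReal (distortionConst ψ u.length) * ν (cylinder u) ≤ cylinderDensity ψ u y := by
  have hmass : ν (cylinder u) = ∫⁻ x, cylinderDensity ψ u x ∂ν := by
    simpa using measure_inter_cylinder hψ hν u .univ
  calc ENNReal.ofReal (distortionConst ψ u.length) * ν (cylinder u)
      = ∫⁻ x, ENNReal.ofReal (distortionConst ψ u.length) * cylinderDensity ψ u x ∂ν := by
        rw [hmass, lintegral_const_mul' _ _ ENNReal.ofReal_ne_top]
    _ ≤ ∫⁻ _, cylinderDensity ψ u y ∂ν :=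
        lintegral_mono fun x => distortionConst_mul_cylinderDensity_le hψ u x y
    _ = cylinderDensity ψ u y := by simp

theorem distortionConst_mul_measure_cylinder_mul_le (hψ : Continuous ψ)
    (hν : transferDual ψ ν = ν) (u : Word N) {B : Set (SeqSp N)} (hB : MeasurableSet B) :
    ENNReal.ofReal (distortionConst ψ u.length) * ν (cylinder u) * ν (cat u ⁻¹' B)
      ≤ ν (B ∩ cylinder u) := by
  rw [measure_inter_cylinder hψ hν u hB, ← setLIntegral_const]
  exact lintegral_mono fun y => distortionConst_mul_measure_cylinder_le hψ hν u y

theorem tsum_distortionConst_mul_measure_cylinder_mul_le (hψ : Continuous ψ)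
    (hν : IsTransferFixed ψ ν) {G : Set (Word N)} (hG : G.PairwiseDisjoint cylinder)
    {B : Set (SeqSp N)} (hB : MeasurableSet B) :
    ∑' u : G, ENNReal.ofReal (distortionConst ψ u.1.length) * ν (cylinder u.1) *
      ν (cat u.1 ⁻¹' B) ≤ ν B := by
  have hdual := hν.transferDual_eq hψ
  have hdisj : Pairwise fun u v : G => Disjoint (B ∩ cylinder u.1) (B ∩ cylinder v.1) :=
    fun u v huv => (hG u.2 v.2 (Subtype.coe_ne_coe.2 huv)).mono inter_subset_right
      inter_subset_right
  calc _ ≤ ∑' u : G, ν (B ∩ cylinder u.1) := ENNReal.tsum_le_tsum fun u =>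
        distortionConst_mul_measure_cylinder_mul_le hψ hdual u.1 hB
    _ ≤ ν (⋃ u : G, B ∩ cylinder u.1) := tsum_meas_le_meas_iUnion_of_disjoint ν
        (fun u => hB.inter (measurableSet_cylinder u.1)) hdisj
    _ ≤ ν B := measure_mono (iUnion_subset fun _ => inter_subset_left)

end TransferFixed

section Coding

variable {Φ : C1IFS N} {K : ℝ≥0} {π : SeqSp N → ℝ}

theorem C1IFS.exists_lipschitzOnWith (Φ : C1IFS N) :
    ∃ K : ℝ≥0, K < 1 ∧ ∀ i, LipschitzOnWith K (Φ.T i) (Icc 0 1) := by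
  choose r hr1 hr using Φ.contracting
  refine ⟨Finset.univ.sup fun i => (r i).toNNReal, ?_, fun i => ?_⟩
  · exact (Finset.sup_lt_iff one_pos).2 fun i _ => Real.toNNReal_lt_one.2 (hr1 i)
  · refine (convex_Icc 0 1).lipschitzOnWith_of_nnnorm_hasDerivWithin_le (Φ.hderiv i) ?_
    exact fun x hx => (NNReal.le_toNNReal_of_coe_le (hr i x hx)).trans
      (Finset.le_sup (f := fun i => (r i).toNNReal) (Finset.mem_univ i))

theorem mapsTo_wordMap (Φ : C1IFS N) (w : Word N) :
    MapsTo (wordMap Φ w) (Icc 0 1) (Icc 0 1) := by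
  induction w with
  | nil => exact mapsTo_id _
  | cons i w ih => exact (Φ.maps_into i).comp ih

theorem lipschitzOnWith_wordMap (hK : ∀ i, LipschitzOnWith K (Φ.T i) (Icc 0 1)) (w : Word N) :
    LipschitzOnWith (K ^ w.length) (wordMap Φ w) (Icc 0 1) := by
  induction w with
  | nil => simpa [wordMap] using LipschitzWith.id.lipschitzOnWith
  | cons i w ih =>
    rw [List.length_cons, pow_succ']
    exact (hK i).comp ih (mapsTo_wordMap Φ w)

theorem continuousOn_wordMap (Φ : C1IFS N) (w : Word N) :
    ContinuousOn (wordMap Φ w) (Icc 0 1) := by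
  obtain ⟨K, -, hK⟩ := Φ.exists_lipschitzOnWith
  exact (lipschitzOnWith_wordMap hK w).continuousOn

theorem dist_le_pow_of_mem_wordMap_image (hK : ∀ i, LipschitzOnWith K (Φ.T i) (Icc 0 1))
    {w : Word N} {p q : ℝ} (hp : p ∈ wordMap Φ w '' Icc 0 1) (hq : q ∈ wordMap Φ w '' Icc 0 1) :
    dist p q ≤ (K : ℝ) ^ w.length := by
  obtain ⟨x, hx, rfl⟩ := hp
  obtain ⟨y, hy, rfl⟩ := hq
  calc dist (wordMap Φ w x) (wordMap Φ w y) ≤ (K : ℝ) ^ w.length * dist x y := by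
        simpa using (lipschitzOnWith_wordMap hK w).dist_le_mul x hx y hy
    _ ≤ (K : ℝ) ^ w.length :=
        mul_le_of_le_one_right (by positivity) (by simpa using Real.dist_le_of_mem_Icc_01 hx hy)

theorem IsCoding.mem_Icc (hπ : IsCoding Φ π) (x : SeqSp N) : π x ∈ Icc (0 : ℝ) 1 :=
  (mapsTo_wordMap Φ _).image_subset (hπ x 0)

theorem IsCoding.continuous (hπ : IsCoding Φ π) : Continuous π := by
  let _ : MetricSpace (SeqSp N) := PiNat.metricSpace
  obtain ⟨K, hK1, hK⟩ := Φ.exists_lipschitzOnWith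
  refine Metric.continuous_iff.2 fun x ε hε => ?_
  obtain ⟨n, hn⟩ := exists_pow_lt_of_lt_one hε (NNReal.coe_lt_one.2 hK1)
  refine ⟨(1 / 2) ^ n, by positivity, fun y hyx => ?_⟩
  have hprefix : (List.ofFn fun i : Fin n => y i) = List.ofFn fun i : Fin n => x i :=
    congrArg _ (funext fun i => PiNat.apply_eq_of_dist_lt hyx i.2.le)
  have hdist := dist_le_pow_of_mem_wordMap_image hK (hprefix ▸ hπ y n) (hπ x n)
  rw [List.length_ofFn] at hdist
  exact hdist.trans_lt hn

theorem IsCoding.apply_cat_singleton (hπ : IsCoding Φ π) (j : Fin N) (x : SeqSp N) :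
    π (cat [j] x) = Φ.T j (π x) := by
  obtain ⟨K, hK1, hK⟩ := Φ.exists_lipschitzOnWith
  have hdist (m : ℕ) : dist (π (cat [j] x)) (Φ.T j (π x)) ≤ (K : ℝ) ^ (m + 1) := by
    have hcat := hπ (cat [j] x) (m + 1)
    rw [ofFn_cat_singleton] at hcat
    have hT : Φ.T j (π x) ∈ wordMap Φ (j :: List.ofFn fun i : Fin m => x i) '' Icc 0 1 := by
      rw [wordMap, image_comp]
      exact mem_image_of_mem _ (hπ x m)
    simpa using dist_le_pow_of_mem_wordMap_image hK hcat hT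
  have hlim : Tendsto (fun m : ℕ => (K : ℝ) ^ (m + 1)) atTop (𝓝 0) :=
    (tendsto_pow_atTop_nhds_zero_of_lt_one K.2 hK1).comp (tendsto_add_atTop_nat 1)
  exact dist_le_zero.1 (ge_of_tendsto' hlim hdist)

theorem IsCoding.apply_cat (hπ : IsCoding Φ π) (w : Word N) (x : SeqSp N) :
    π (cat w x) = wordMap Φ w (π x) := by
  induction w with
  | nil => rw [cat_nil, wordMap, id]
  | cons i w ih => rw [cat_cons, hπ.apply_cat_singleton, ih, wordMap, Function.comp_apply]

theorem IsCoding.aemeasurable_wordMap (hπ : IsCoding Φ π) (ν : Measure (SeqSp N)) (w : Word N) :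
    AEMeasurable (wordMap Φ w) (ν.map π) := by
  have hIcc : ∀ᵐ p ∂ν.map π, p ∈ Icc (0 : ℝ) 1 :=
    (ae_map_iff hπ.continuous.aemeasurable measurableSet_Icc).2 (.of_forall hπ.mem_Icc)
  rw [← Measure.restrict_eq_self_of_ae_mem hIcc]
  exact (continuousOn_wordMap Φ w).aemeasurable measurableSet_Icc

theorem IsCoding.map_wordMap_preimage (hπ : IsCoding Φ π) (ν : Measure (SeqSp N)) (w : Word N)
    {E : Set ℝ} (hE : MeasurableSet E) :
    ν.map π (wordMap Φ w ⁻¹' E) = ν (cat w ⁻¹' (π ⁻¹' E)) := by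
  have hsemiconj : π ⁻¹' (wordMap Φ w ⁻¹' E) = cat w ⁻¹' (π ⁻¹' E) := by
    ext x
    simp only [mem_preimage, hπ.apply_cat]
  rw [Measure.map_apply₀ hπ.continuous.aemeasurable
    ((hπ.aemeasurable_wordMap ν w).nullMeasurable hE), hsemiconj]

end Coding

end Symb

theorem weak_Gibbs_partition_inequality_general
    {N : ℕ} (Φ : C1IFS N) (π : SeqSp N → ℝ) (hπ : IsCoding Φ π)
    (ψ : SeqSp N → ℝ) (hψ : Continuous ψ)
    (ν : Measure (SeqSp N)) [IsProbabilityMeasure ν] (hν : IsTransferFixed ψ ν) :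
    (∀ G : Set (Word N), G.PairwiseDisjoint cylinder → ∀ E : Set ℝ, MeasurableSet E →
      ∑' u : G, ENNReal.ofReal (distortionConst ψ u.1.length) * ν (cylinder u.1) *
        ν.map π (wordMap Φ u.1 ⁻¹' E) ≤ ν.map π E) ∧
    Tendsto (fun n => Real.log (distortionConst ψ n) / n) atTop (𝓝 0) := by
  refine ⟨fun G hG E hE => ?_, tendsto_log_distortionConst_div hψ⟩
  simp only [hπ.map_wordMap_preimage ν _ hE]
  rw [Measure.map_apply hπ.continuous.measurable hE]
  exact tsum_distortionConst_mul_measure_cylinder_mul_le hψ hν hG (hπ.continuous.measurable hE)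

/-- **Lemma 5.8.**  For a weak `ψ`-Gibbs measure `ρ = ν∘π⁻¹`, any finite family `G` of
words whose cylinders partition `I^ℕ` and any Borel set `E ⊆ [0,1]`,
`ρ(E) ≥ Σ_{u∈G} c_{|u|} ν([u]) ρ(T_u⁻¹(E))` with `c_n = e^{−Σ_{i<n} var_i(ψ)}`;
in particular `log c_n = o(n)`. -/
theorem weak_Gibbs_partition_inequality
    {N : ℕ} (Φ : C1IFS N) (hΦ : Φ.NontrivialIFS)
    (π : SeqSp N → ℝ) (hπ : IsCoding Φ π) (hπc : Continuous π)
    (ψ : SeqSp N → ℝ) (hψc : Continuous ψ) (hψn : Normalized ψ)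
    (ν : Measure (SeqSp N)) [IsProbabilityMeasure ν] (hν : IsTransferFixed ψ ν)
    (ρ : Measure ℝ) (hρ : ρ = Measure.map π ν)
    (c : ℕ → ℝ) (hc : ∀ n, c n = Real.exp (-(∑ i ∈ Finset.range n, varn ψ i))) :
    (∀ G : Finset (Word N),
      (⋃ u ∈ G, cylinder u) = Set.univ →
      (∀ u ∈ G, ∀ v ∈ G, u ≠ v → Disjoint (cylinder u) (cylinder v)) →
      ∀ E : Set ℝ, MeasurableSet E →
        (∑ u ∈ G, ENNReal.ofReal (c u.length) * ν (cylinder u) * ρ (wordMap Φ u ⁻¹' E))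
          ≤ ρ E) ∧
    Filter.Tendsto (fun n => Real.log (c n) / n) Filter.atTop (nhds 0) := by
  obtain rfl : c = distortionConst ψ := funext hc
  subst hρ
  obtain ⟨hle, hlim⟩ := weak_Gibbs_partition_inequality_general Φ π hπ ψ hψc ν hν
  exact ⟨fun G _ hG E hE => (Finset.tsum_subtype G _).symm.trans_le (hle G hG E hE), hlim⟩
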